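/- Let L₂ be the poset of 2-subgroups of G = PSU(3,q), q = 2^(2^n), ordered by inclusion, with Möbius function μ_{L₂}. Then ∑_H μ_{L₂}({1}, H) = -(q³+1), where the sum ranges over all nontrivial 2-subgroups H of G; equivalently, the Euler characteristic of the order complex of the poset of nontrivial 2-subgroups of G equals q³+1. -/

import Mathlib

/-!
Let `K = F_{q²}` and let `G = SU(3,q)` act on the isotropic vectors of `K³`, those `v` with
`⟨v, v⟩ = ∑ v i ^ (q + 1) = 0`. There are `q⁵ - q³ + q² = (q³ + 1)(q² - 1) + 1` of them
(`card_Iso`), because the norm `z ↦ z ^ (q + 1)` takes every nonzero value of `F_q` exactly `q + 1`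
times (`card_norm_fiber`).

* The stabilizer of a nonzero isotropic vector `v` is a nontrivial `2`-group. If `g` fixes `v`,
  then `g - 1` maps `K³` into `v^⊥`, maps `v^⊥` into `K v`, and kills `v`, so `(g - 1)³ = 0` and
  `g⁴ = 1` (`sub_one_pow_three`, `stabilizer_isPGroup`). It contains the transvection
  `x ↦ x + ⟨x, v⟩ v` (`stabilizer_ne_bot`).
* The nonzero isotropic vectors fixed by a nontrivial `2`-subgroup `H` form one punctured line, so
  there are `q² - 1` of them (`card_fixed`). There is one because the number of isotropic vectors
  is even and `0` is fixed; two independent ones would force `H` to be trivial, since an element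
  of determinant `1` fixing `v` and `w` also fixes the conjugate of `v × w` (`eq_one_of_fixes`).

Since `gcd(3, q + 1) = 1` the center of `G` is trivial (`center_eq_bot`), so all of this holds in
`PSU(3,q)`. The Möbius function sums to `0` over all subgroups of a nontrivial `2`-group, hence to
`-1` over the nontrivial ones. Counting pairs `(v, H)` with `H` fixing `v` in two ways gives
`(q² - 1) ∑ μ(1, H) = -(q³ + 1)(q² - 1)` (`double_count`).
-/

open scoped Classical Pointwise

namespace PSUPaper

/-- `q = 2^(2^n)`. -/
abbrev qval (n : ℕ) : ℕ := 2 ^ 2 ^ n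

/-- The field with `q² = 2^(2^(n+1))` elements. -/
abbrev Fq2 (n : ℕ) : Type := GaloisField 2 (2 ^ (n + 1))

/-- The involutory automorphism `x ↦ x^q` of `F_{q²}`, as a star-ring structure. -/
noncomputable instance starRingFq2 (n : ℕ) : StarRing (Fq2 n) where
  star x := x ^ qval n
  star_involutive x := by
    letI : Fintype (Fq2 n) := Fintype.ofFinite _
    show (x ^ qval n) ^ qval n = x
    rw [← pow_mul]
    have h : qval n * qval n = 2 ^ 2 ^ (n + 1) := by
      rw [← pow_add, ← two_mul, pow_succ, mul_comm]
    have hcard : Fintype.card (Fq2 n) = 2 ^ 2 ^ (n + 1) := by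
      rw [← Nat.card_eq_fintype_card, GaloisField.card 2 (2 ^ (n + 1)) (by positivity)]
    rw [h, ← hcard]
    exact FiniteField.pow_card x
  star_mul x y := by
    show (x * y) ^ qval n = y ^ qval n * x ^ qval n
    rw [mul_pow, mul_comm]
  star_add x y := by
    show (x + y) ^ qval n = x ^ qval n + y ^ qval n
    exact add_pow_char_pow x y 2 (2 ^ n)

/-- `SU(3,q)`: the subgroup of the unitary group `{M | M * (M^σ)ᵀ = 1}` (with respect to the
star structure `σ : x ↦ x^q` on `F_{q²}`) consisting of the matrices of determinant 1. -/
noncomputable def SU3 (n : ℕ) : Subgroup (Matrix.unitaryGroup (Fin 3) (Fq2 n)) where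
  carrier := {M | (M : Matrix (Fin 3) (Fin 3) (Fq2 n)).det = 1}
  one_mem' := by simp
  mul_mem' := by
    intro a b ha hb
    simp only [Set.mem_setOf_eq, Matrix.UnitaryGroup.mul_val, Matrix.det_mul] at *
    rw [ha, hb, mul_one]
  inv_mem' := by
    intro a ha
    simp only [Set.mem_setOf_eq, Matrix.UnitaryGroup.inv_val] at *
    rw [Matrix.star_eq_conjTranspose, Matrix.det_conjTranspose, ha, star_one]

/-- `PSU(3,q)`: the quotient of `SU(3,q)` by its center. -/
noncomputable abbrev PSU3 (n : ℕ) : Type := SU3 n ⧸ Subgroup.center (SU3 n)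

/-- `mu` is the Möbius function `H ↦ μ(H, G)` of the subgroup lattice of `G`:
`μ(G,G) = 1` and `∑_{J : H ≤ J ≤ G} μ(J,G) = 0` for `H < G`. -/
def IsSubgroupMobius {G : Type*} [Group G] (mu : Subgroup G → ℤ) : Prop :=
  ∀ H : Subgroup G, (∑ᶠ K ∈ {K : Subgroup G | H ≤ K}, mu K) = if H = ⊤ then 1 else 0

/-- `H` and `K` are conjugate subgroups. -/
def IsConjSub {G : Type*} [Group G] (H K : Subgroup G) : Prop :=
  ∃ g : G, Subgroup.map (MulAut.conj g).toMonoidHom H = K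

/-- The conjugacy classes of subgroups of `G`. -/
abbrev SubClasses (G : Type*) [Group G] : Type _ :=
  Quotient (MulAction.orbitRel (ConjAct G) (Subgroup G))

/-- The conjugacy class of a subgroup. -/
def clsOf {G : Type*} [Group G] (H : Subgroup G) : SubClasses G :=
  Quotient.mk (MulAction.orbitRel (ConjAct G) (Subgroup G)) H

/-- The order on conjugacy classes of subgroups: `[H] ≤ [K]` iff `H` is contained in some
conjugate of `K`. -/
def clsLe {G : Type*} [Group G] (x y : SubClasses G) : Prop :=
  ∃ H K : Subgroup G, clsOf H = x ∧ clsOf K = y ∧ ∃ g : ConjAct G, H ≤ g • K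

/-- `lam` is the Möbius function `[H] ↦ μ([H], [G])` of the poset of conjugacy classes of
subgroups of `G`: `μ([G],[G]) = 1` and `∑_{[J] : [H] ≤ [J] ≤ [G]} μ([J],[G]) = 0` for
`[H] < [G]`. -/
def IsClassMobius {G : Type*} [Group G] (lam : SubClasses G → ℤ) : Prop :=
  ∀ x : SubClasses G, (∑ᶠ y ∈ {y : SubClasses G | clsLe x y}, lam y) =
    if x = clsOf (⊤ : Subgroup G) then 1 else 0

/-- `m` is the Möbius function `H ↦ μ_{L_p}({1}, H)` of the poset `L_p` of `p`-subgroups of `G`: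
`μ_{L_p}({1},{1}) = 1` and `∑_{J ∈ L_p : J ≤ K} μ_{L_p}({1},J) = 0` for `{1} < K ∈ L_p`. -/
def IsPMobiusBot {G : Type*} [Group G] (p : ℕ) (m : Subgroup G → ℤ) : Prop :=
  m ⊥ = 1 ∧ ∀ K : Subgroup G, IsPGroup p K → ⊥ < K →
    (∑ᶠ J ∈ {J : Subgroup G | IsPGroup p J ∧ J ≤ K}, m J) = 0

/-! ### Special unitary 3 × 3 matrices and isotropic vectors -/

section
open Matrix
variable {K : Type*} [Field K] [StarRing K]

/-- The cross product transforms by the cofactor matrix, which for a unitary matrix of determinant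
`1` is its entrywise conjugate. -/
theorem cross_mulVec_unitary (M : Matrix (Fin 3) (Fin 3) K)
    (hM : M ∈ Matrix.unitaryGroup (Fin 3) K) (hd : M.det = 1) (x y : Fin 3 → K) :
    (M *ᵥ x) ⨯₃ (M *ᵥ y) = M.map star *ᵥ (x ⨯₃ y) := by
  have h1 : (M *ᵥ x) ⨯₃ (M *ᵥ y) = M.adjugateᵀ *ᵥ (x ⨯₃ y) := by
    rw [Matrix.adjugate_fin_three]
    ext i
    fin_cases i <;>
      simp [cross_apply, Matrix.mulVec, dotProduct, Fin.sum_univ_three] <;> ring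
  have h2 : M.adjugate = star M := by
    have h := (Matrix.mem_unitaryGroup_iff).1 hM
    calc M.adjugate = M.adjugate * (M * star M) := by rw [h, mul_one]
      _ = star M := by rw [← mul_assoc, Matrix.adjugate_mul, hd, one_smul, one_mul]
  rw [h1, h2]
  rfl

theorem exists_smul_of_cross_eq_zero {K : Type*} [Field K] {a b : Fin 3 → K}
    (ha : a ≠ 0) (h : a ⨯₃ b = 0) :
    ∃ c : K, b = c • a := by
  have h0 := congrFun h 0
  have h1 := congrFun h 1
  have h2 := congrFun h 2
  simp [cross_apply] at h0 h1 h2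
  obtain ⟨i, hi⟩ := Function.ne_iff.1 ha
  refine ⟨b i / a i, ?_⟩
  ext j
  simp only [Pi.zero_apply] at hi
  simp only [Pi.smul_apply, smul_eq_mul]
  rw [div_mul_eq_mul_div, eq_div_iff hi]
  fin_cases i <;> fin_cases j <;> simp <;> grind

/-- The cross product of a nonzero isotropic vector `v` with a vector `w` orthogonal to it is
proportional to the conjugate of `v`. -/
theorem exists_cross_eq_smul_star {v w : Fin 3 → K} (hv : v ≠ 0) (hvv : v ⬝ᵥ star v = 0)
    (hwv : w ⬝ᵥ star v = 0) : ∃ c : K, v ⨯₃ w = c • star v := by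
  apply exists_smul_of_cross_eq_zero (star_ne_zero.2 hv)
  rw [cross_cross_eq_smul_sub_smul', dotProduct_comm, hwv, hvv]
  simp

theorem dotProduct_star_unitary {M : Matrix (Fin 3) (Fin 3) K}
    (hM : M ∈ Matrix.unitaryGroup (Fin 3) K) (x y : Fin 3 → K) :
    (M *ᵥ x) ⬝ᵥ star (M *ᵥ y) = x ⬝ᵥ star y := by
  rw [Matrix.star_mulVec, dotProduct_comm, ← Matrix.dotProduct_mulVec, Matrix.mulVec_mulVec,
    ← Matrix.star_eq_conjTranspose, (Matrix.mem_unitaryGroup_iff').1 hM, Matrix.one_mulVec,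
    dotProduct_comm]

theorem star_dot_star (x y : Fin 3 → K) : star (x ⬝ᵥ star y) = y ⬝ᵥ star x := by
  simp [dotProduct, Fin.sum_univ_three, mul_comm]

theorem map_star_mulVec_star (M : Matrix (Fin 3) (Fin 3) K) (x : Fin 3 → K) :
    M.map star *ᵥ star x = star (M *ᵥ x) := by
  ext i
  simp [Matrix.mulVec, dotProduct, Fin.sum_univ_three]

/-- A special unitary matrix fixing a nonzero isotropic vector is unipotent. -/
theorem sub_one_pow_three {M : Matrix (Fin 3) (Fin 3) K}
    (hM : M ∈ Matrix.unitaryGroup (Fin 3) K) (hd : M.det = 1) {v : Fin 3 → K} (hv : v ≠ 0)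
    (hvv : v ⬝ᵥ star v = 0) (hfix : M *ᵥ v = v) : (M - 1) ^ 3 = 0 := by
  -- `M - 1` maps everything into `v^⊥`, the plane `v^⊥` into the line `K v`, and kills `v`.
  have h1 : ∀ x, ((M - 1) *ᵥ x) ⬝ᵥ star v = 0 := by
    intro x
    have := dotProduct_star_unitary hM x v
    rw [hfix] at this
    rw [Matrix.sub_mulVec, Matrix.one_mulVec, sub_dotProduct, this, sub_self]
  have h2 : ∀ w, w ⬝ᵥ star v = 0 → ∃ c : K, (M - 1) *ᵥ w = c • v := by
    intro w hw
    apply exists_smul_of_cross_eq_zero hv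
    obtain ⟨c, hc⟩ := exists_cross_eq_smul_star hv hvv hw
    have h := cross_mulVec_unitary M hM hd v w
    rw [hc, hfix, Matrix.mulVec_smul, map_star_mulVec_star, hfix, ← hc] at h
    rw [Matrix.sub_mulVec, Matrix.one_mulVec, map_sub, h, sub_self]
  apply Matrix.ext_of_mulVec_single
  intro i
  obtain ⟨c, hc⟩ := h2 _ (h1 (Pi.single i 1))
  rw [pow_succ', pow_two, ← Matrix.mulVec_mulVec, ← Matrix.mulVec_mulVec, hc, Matrix.mulVec_smul,
    Matrix.sub_mulVec, Matrix.one_mulVec, hfix, sub_self, smul_zero, Matrix.zero_mulVec]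

/-- A special unitary matrix fixing two independent isotropic vectors is the identity. -/
theorem eq_one_of_fixes {M : Matrix (Fin 3) (Fin 3) K}
    (hM : M ∈ Matrix.unitaryGroup (Fin 3) K) (hd : M.det = 1) {v w : Fin 3 → K} (hv : v ≠ 0)
    (hw : w ≠ 0)
    (hvv : v ⬝ᵥ star v = 0) (hww : w ⬝ᵥ star w = 0) (hMv : M *ᵥ v = v) (hMw : M *ᵥ w = w)
    (hvw : ¬ ∃ c : K, w = c • v) : M = 1 := by
  have hx : v ⨯₃ w ≠ 0 := fun h => hvw (exists_smul_of_cross_eq_zero hv h)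
  -- otherwise `v × w` is proportional to the conjugates of both `v` and `w`
  have hne : w ⬝ᵥ star v ≠ 0 := by
    intro h
    have h' : v ⬝ᵥ star w = 0 := by rw [← star_dot_star, h, star_zero]
    obtain ⟨c, hc⟩ := exists_cross_eq_smul_star hv hvv h
    obtain ⟨d, hd'⟩ := exists_cross_eq_smul_star hw hww h'
    rw [← cross_anticomm, hc] at hd'
    have hd0 : d ≠ 0 := by
      rintro rfl
      rw [zero_smul, neg_eq_zero] at hd'
      exact hx (hc.trans hd')
    apply hvw
    refine ⟨star (-(d⁻¹ * c)), ?_⟩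
    have : star w = (-(d⁻¹ * c)) • star v := by
      rw [neg_smul, mul_smul, ← smul_neg, hd', smul_smul, inv_mul_cancel₀ hd0, one_smul]
    rw [← star_star w, this, star_smul, star_star]
  have hu : M *ᵥ star (v ⨯₃ w) = star (v ⨯₃ w) := by
    have h := cross_mulVec_unitary M hM hd v w
    rw [hMv, hMw] at h
    have hs := map_star_mulVec_star M (star (v ⨯₃ w))
    rw [star_star, ← h] at hs
    rw [← star_star (M *ᵥ star (v ⨯₃ w)), ← hs]
  -- `v`, `w` and the conjugate of `v × w` form a basis of fixed vectors
  have hdet : (Matrix.of ![star (v ⨯₃ w), v, w]).det ≠ 0 := by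
    have : (Matrix.of ![star (v ⨯₃ w), v, w]).det
        = star (v ⨯₃ w) ⬝ᵥ v ⨯₃ w := (triple_product_eq_det _ _ _).symm
    have hs : star (v ⨯₃ w) = star v ⨯₃ star w := by
      ext i; fin_cases i <;> simp [cross_apply]
    rw [this, hs, cross_dot_cross, dotProduct_comm, hvv, zero_mul, zero_sub, neg_ne_zero]
    refine mul_ne_zero (by rwa [dotProduct_comm]) ?_
    rwa [dotProduct_comm, ← star_dot_star, star_ne_zero]
  have hP : M * (Matrix.of ![star (v ⨯₃ w), v, w])ᵀ = (Matrix.of ![star (v ⨯₃ w), v, w])ᵀ := by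
    ext i j
    fin_cases j
    · exact congrFun hu i
    · exact congrFun hMv i
    · exact congrFun hMw i
  have hunit : IsUnit (Matrix.of ![star (v ⨯₃ w), v, w])ᵀ := by
    rw [Matrix.isUnit_iff_isUnit_det, Matrix.det_transpose]
    exact hdet.isUnit
  exact hunit.mul_right_cancel (by rw [hP, one_mul])

/-- The map `x ↦ x + ⟨x, v⟩ v`, which is unitary in characteristic `2` when
`v` is isotropic. -/
def transv (v : Fin 3 → K) : Matrix (Fin 3) (Fin 3) K := 1 + Matrix.vecMulVec v (star v)

theorem transv_mem [CharP K 2] {v : Fin 3 → K} (hvv : v ⬝ᵥ star v = 0) :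
    transv v ∈ Matrix.unitaryGroup (Fin 3) K := by
  have hs : star (transv v) = transv v := by
    rw [transv, star_add, star_one, Matrix.star_eq_conjTranspose, Matrix.conjTranspose_vecMulVec,
      star_star]
  have hsq : Matrix.vecMulVec v (star v) * Matrix.vecMulVec v (star v) = 0 := by
    rw [Matrix.vecMulVec_mul_vecMulVec, dotProduct_comm, hvv, zero_smul, Matrix.vecMulVec_zero]
  have h2 : Matrix.vecMulVec v (star v) + Matrix.vecMulVec v (star v) = 0 := by
    ext i j
    exact CharTwo.add_self_eq_zero _
  rw [Matrix.mem_unitaryGroup_iff, hs, transv, add_mul, mul_add, mul_add, hsq, one_mul, one_mul,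
    mul_one, add_zero, add_assoc, h2, add_zero]

theorem transv_det {v : Fin 3 → K} (hvv : v ⬝ᵥ star v = 0) : (transv v).det = 1 := by
  rw [transv, Matrix.vecMulVec_eq Unit, Matrix.det_one_add_replicateCol_mul_replicateRow,
    dotProduct_comm, hvv, add_zero]

theorem transv_mulVec (v x : Fin 3 → K) :
    transv v *ᵥ x = x + (x ⬝ᵥ star v) • v := by
  rw [transv, Matrix.add_mulVec, Matrix.one_mulVec, Matrix.vecMulVec_mulVec, dotProduct_comm]
  simp

end

/-! ### Counting isotropic vectors -/

section
variable (n : ℕ)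

theorem star_Fq2 (x : Fq2 n) : star x = x ^ qval n := rfl

theorem card_Fq2 : Nat.card (Fq2 n) = qval n ^ 2 := by
  rw [GaloisField.card 2 (2 ^ (n + 1)) (by positivity), qval, ← pow_mul, pow_succ]

theorem qval_pos : 0 < qval n := by positivity

theorem two_le_qval : 2 ≤ qval n := by
  have : 2 ^ 1 ≤ 2 ^ 2 ^ n := Nat.pow_le_pow_right (by norm_num) (Nat.one_le_two_pow)
  simpa using this

noncomputable instance : Fintype (Fq2 n) := Fintype.ofFinite _

theorem fintype_card_Fq2 : Fintype.card (Fq2 n) = qval n ^ 2 := by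
  rw [← Nat.card_eq_fintype_card, card_Fq2]

theorem card_units_Fq2 : Nat.card (Fq2 n)ˣ = (qval n - 1) * (qval n + 1) := by
  rw [Nat.card_units, card_Fq2, mul_comm, ← Nat.sq_sub_sq, one_pow]

/-- The norm `z ↦ z^(q+1)` maps the units onto the units `t` with `t^(q-1) = 1`. -/
theorem norm_range :
    (powMonoidHom (qval n + 1) : (Fq2 n)ˣ →* (Fq2 n)ˣ).range =
      (powMonoidHom (qval n - 1) : (Fq2 n)ˣ →* (Fq2 n)ˣ).ker := by
  apply Subgroup.eq_of_le_of_card_ge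
  · rintro _ ⟨z, rfl⟩
    rw [MonoidHom.mem_ker, powMonoidHom_apply, powMonoidHom_apply, ← pow_mul, mul_comm,
      ← card_units_Fq2]
    exact pow_card_eq_one'
  · rw [IsCyclic.card_powMonoidHom_ker, IsCyclic.card_powMonoidHom_range, card_units_Fq2,
      Nat.gcd_eq_right (Dvd.intro _ rfl), Nat.gcd_eq_right (Dvd.intro_left _ rfl),
      Nat.mul_div_cancel _ (by omega)]

theorem card_norm_fiber {t : Fq2 n} (ht : t ≠ 0) (htq : t ^ qval n = t) :
    (Finset.univ.filter fun z : Fq2 n => z ^ (qval n + 1) = t).card = qval n + 1 := by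
  have hu : Units.mk0 t ht ∈ (powMonoidHom (qval n + 1) : (Fq2 n)ˣ →* (Fq2 n)ˣ).range := by
    rw [norm_range, MonoidHom.mem_ker, powMonoidHom_apply]
    ext
    rw [Units.val_pow_eq_pow_val, Units.val_mk0, Units.val_one]
    apply mul_right_cancel₀ ht
    rw [← pow_succ, Nat.sub_add_cancel (qval_pos n), htq, one_mul]
  obtain ⟨z₀, hz₀⟩ := hu
  have hz₀' : (z₀ : Fq2 n) ^ (qval n + 1) = t := by
    simpa using congrArg Units.val hz₀
  have hk : Nat.card (powMonoidHom (qval n + 1) : (Fq2 n)ˣ →* (Fq2 n)ˣ).ker = qval n + 1 := by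
    rw [IsCyclic.card_powMonoidHom_ker, card_units_Fq2, Nat.gcd_eq_right (Dvd.intro_left _ rfl)]
  have hmem : ∀ k : (powMonoidHom (qval n + 1) : (Fq2 n)ˣ →* (Fq2 n)ˣ).ker,
      ((z₀ * k.1 : (Fq2 n)ˣ) : Fq2 n) ^ (qval n + 1) = t := by
    intro k
    have := congrArg Units.val (MonoidHom.mem_ker.1 k.2)
    rw [powMonoidHom_apply, Units.val_pow_eq_pow_val, Units.val_one] at this
    rw [Units.val_mul, mul_pow, hz₀', this, mul_one]
  rw [← Fintype.card_subtype, ← Nat.card_eq_fintype_card]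
  refine Eq.trans (Nat.card_congr (Equiv.ofBijective (fun k => ⟨_, hmem k⟩) ⟨?_, ?_⟩)).symm hk
  · intro a b h
    have := congrArg Subtype.val h
    exact Subtype.ext (mul_left_cancel (Units.ext this))
  · rintro ⟨z, hz⟩
    have hz0 : z ≠ 0 := by
      rintro rfl
      rw [zero_pow (by omega)] at hz
      exact ht hz.symm
    refine ⟨⟨z₀⁻¹ * Units.mk0 z hz0, ?_⟩, ?_⟩
    · rw [MonoidHom.mem_ker, map_mul, map_inv, hz₀, inv_mul_eq_one]
      ext
      simpa using hz.symm
    · ext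
      simp

theorem norm_pow_qval (x : Fq2 n) : (x ^ (qval n + 1)) ^ qval n = x ^ (qval n + 1) := by
  have h : x ^ (qval n ^ 2) = x := by
    rw [← fintype_card_Fq2]; exact FiniteField.pow_card x
  rw [← pow_mul, add_mul, one_mul, ← pow_two, pow_add, h, pow_succ (M := Fq2 n), mul_comm x]

/-- The number of ways to complete `(x, y)` to an isotropic vector: one if the norms of `x` and `y`
agree, and `q + 1` otherwise. -/
theorem card_norm_fiber_add (x y : Fq2 n) :
    ((Finset.univ.filter fun z : Fq2 n =>
      x ^ (qval n + 1) + y ^ (qval n + 1) + z ^ (qval n + 1) = 0).card : ℤ) =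
      (qval n + 1) - if y ^ (qval n + 1) = x ^ (qval n + 1) then (qval n : ℤ) else 0 := by
  have e : ∀ z : Fq2 n, x ^ (qval n + 1) + y ^ (qval n + 1) + z ^ (qval n + 1) = 0 ↔
      z ^ (qval n + 1) = x ^ (qval n + 1) + y ^ (qval n + 1) := fun z => by
    rw [CharTwo.add_eq_zero, eq_comm]
  simp_rw [e]
  split_ifs with h
  · rw [h, CharTwo.add_self_eq_zero]
    have : (Finset.univ.filter fun z : Fq2 n => z ^ (qval n + 1) = 0) = {0} := by
      ext z; simp
    rw [this]; simp
  · rw [card_norm_fiber]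
    · simp
    · rwa [Ne, CharTwo.add_eq_zero, eq_comm]
    · rw [add_pow_char_pow, norm_pow_qval, norm_pow_qval]

theorem card_norm_eq (x : Fq2 n) :
    ((Finset.univ.filter fun y : Fq2 n => y ^ (qval n + 1) = x ^ (qval n + 1)).card : ℤ) =
      (qval n + 1) - if x = 0 then (qval n : ℤ) else 0 := by
  split_ifs with h
  · subst h
    have : (Finset.univ.filter fun z : Fq2 n => z ^ (qval n + 1) = 0 ^ (qval n + 1)) = {0} := by
      ext z; simp
    rw [this]; simp
  · rw [card_norm_fiber n (pow_ne_zero _ h) (norm_pow_qval n x)]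
    simp

/-- The isotropic vectors of `K³`, the zero vector included. -/
def Iso : Type := {v : Fin 3 → Fq2 n // v ⬝ᵥ star v = 0}

instance : Finite (Iso n) := inferInstanceAs (Finite {v : Fin 3 → Fq2 n // v ⬝ᵥ star v = 0})

theorem dotProduct_star_self (v : Fin 3 → Fq2 n) :
    v ⬝ᵥ star v = v 0 ^ (qval n + 1) + v 1 ^ (qval n + 1) + v 2 ^ (qval n + 1) := by
  simp only [dotProduct, Fin.sum_univ_three, Pi.star_apply, star_Fq2, pow_succ']

theorem card_Iso :
    (Nat.card (Iso n) : ℤ) = (qval n : ℤ) ^ 5 - (qval n : ℤ) ^ 3 + (qval n : ℤ) ^ 2 := by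
  let e : {p : Fq2 n × Fq2 n × Fq2 n //
      p.1 ^ (qval n + 1) + p.2.1 ^ (qval n + 1) + p.2.2 ^ (qval n + 1) = 0} ≃ Iso n :=
    { toFun := fun p => ⟨![p.1.1, p.1.2.1, p.1.2.2], by
        rw [dotProduct_star_self]; exact p.2⟩
      invFun := fun v => ⟨(v.1 0, v.1 1, v.1 2), by
        rw [← dotProduct_star_self n v.1]; exact v.2⟩
      left_inv := fun p => rfl
      right_inv := fun v => Subtype.ext (by ext i; fin_cases i <;> rfl) }
  rw [← Nat.card_congr e, Nat.card_eq_fintype_card, Fintype.card_subtype, Finset.card_filter,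
    Fintype.sum_prod_type]
  simp_rw [Fintype.sum_prod_type, ← Finset.card_filter]
  push_cast
  simp_rw [card_norm_fiber_add, Finset.sum_sub_distrib, ← Finset.sum_filter, Finset.sum_const,
    nsmul_eq_mul, card_norm_eq, sub_mul, Finset.sum_sub_distrib, ite_mul, zero_mul,
    Finset.sum_ite_eq', Finset.sum_const, nsmul_eq_mul, Finset.card_univ, fintype_card_Fq2]
  simp
  ring
end

/-! ### Double counting with the Möbius function -/

/-- If every nontrivial `p`-subgroup lies in exactly `k` of the nontrivial `p`-subgroups `S x`,
double counting gives `k ∑ μ(1, H) = -|X|`: the Möbius function sums to `-1` over the nontrivial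
subgroups of each `S x`. -/
theorem double_count {G X : Type*} [Group G] [Finite G] [Finite X] (p : ℕ) (m : Subgroup G → ℤ)
    (hm : IsPMobiusBot p m) (S : X → Subgroup G) (hS : ∀ x, IsPGroup p (S x))
    (hS1 : ∀ x, S x ≠ ⊥) (k : ℕ)
    (hk : ∀ H : Subgroup G, IsPGroup p H → H ≠ ⊥ → Nat.card {x // H ≤ S x} = k) :
    (k : ℤ) * (∑ᶠ H ∈ {H : Subgroup G | IsPGroup p H ∧ H ≠ ⊥}, m H) = -(Nat.card X : ℤ) := by
  have := Fintype.ofFinite X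
  have := Fintype.ofFinite (Subgroup G)
  have h1 : (∑ᶠ H ∈ {H : Subgroup G | IsPGroup p H ∧ H ≠ ⊥}, m H) =
      ∑ H ∈ Finset.univ.filter (fun H : Subgroup G => IsPGroup p H ∧ H ≠ ⊥), m H := by
    rw [← finsum_mem_finset_eq_sum]; simp
  have h2 : ∀ x, ∑ H ∈ Finset.univ.filter
      (fun H : Subgroup G => (IsPGroup p H ∧ H ≠ ⊥) ∧ H ≤ S x), m H = -1 := by
    intro x
    have h := hm.2 (S x) (hS x) (bot_lt_iff_ne_bot.2 (hS1 x))
    have h3 : (∑ᶠ J ∈ {J : Subgroup G | IsPGroup p J ∧ J ≤ S x}, m J) =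
        ∑ H ∈ insert ⊥ (Finset.univ.filter
          (fun H : Subgroup G => (IsPGroup p H ∧ H ≠ ⊥) ∧ H ≤ S x)), m H := by
      suffices hset : {J : Subgroup G | IsPGroup p J ∧ J ≤ S x} =
          (insert ⊥ (Finset.univ.filter
            (fun H : Subgroup G => (IsPGroup p H ∧ H ≠ ⊥) ∧ H ≤ S x)) : Finset _) by
        rw [← finsum_mem_finset_eq_sum, hset]
        simp only [Finset.mem_coe]
      ext H
      by_cases hH : H = ⊥
      · subst hH
        simp [IsPGroup.of_bot]
      · simp [hH]
    rw [h3, Finset.sum_insert (by simp), hm.1] at h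
    linarith
  calc (k : ℤ) * (∑ᶠ H ∈ {H : Subgroup G | IsPGroup p H ∧ H ≠ ⊥}, m H)
      = ∑ H ∈ Finset.univ.filter (fun H : Subgroup G => IsPGroup p H ∧ H ≠ ⊥),
          ∑ x ∈ Finset.univ.filter (fun x => H ≤ S x), m H := by
        rw [h1, Finset.mul_sum]
        refine Finset.sum_congr rfl fun H hH => ?_
        rw [Finset.mem_filter] at hH
        rw [Finset.sum_const, nsmul_eq_mul, ← hk H hH.2.1 hH.2.2, Nat.card_eq_fintype_card,
          Fintype.card_subtype]
    _ = ∑ x : X, ∑ H ∈ Finset.univ.filter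
          (fun H : Subgroup G => (IsPGroup p H ∧ H ≠ ⊥) ∧ H ≤ S x), m H :=
        Finset.sum_comm' (by simp)
    _ = -(Nat.card X : ℤ) := by
        simp [h2, Nat.card_eq_fintype_card]

/-! ### Stabilizers of isotropic vectors -/

section
open Matrix
variable (n : ℕ)

instance : CharP (Fq2 n) 2 := inferInstance

/-- The matrix of an element of `SU(3,q)`. -/
noncomputable def mat {n : ℕ} (g : SU3 n) : Matrix (Fin 3) (Fin 3) (Fq2 n) := g.1.1

theorem mat_mem {n : ℕ} (g : SU3 n) : mat g ∈ Matrix.unitaryGroup (Fin 3) (Fq2 n) := g.1.2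

theorem mat_det {n : ℕ} (g : SU3 n) : (mat g).det = 1 := g.2

theorem mat_mul {n : ℕ} (g h : SU3 n) : mat (g * h) = mat g * mat h := rfl

theorem mat_one {n : ℕ} : mat (1 : SU3 n) = 1 := rfl

theorem mat_injective {n : ℕ} {g h : SU3 n} (e : mat g = mat h) : g = h :=
  Subtype.ext (Subtype.ext e)

theorem mat_pow {n : ℕ} (g : SU3 n) (k : ℕ) : mat (g ^ k) = mat g ^ k := by
  induction k with
  | zero => rfl
  | succ k ih => rw [pow_succ, mat_mul, ih, ← pow_succ]

instance : Finite (SU3 n) := Finite.of_injective mat fun _ _ h => mat_injective h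

/-- `SU(3,q)` acts on the isotropic vectors by matrix multiplication. -/
noncomputable instance : MulAction (SU3 n) (Iso n) where
  smul g v := ⟨mat g *ᵥ v.1, by rw [dotProduct_star_unitary (mat_mem g)]; exact v.2⟩
  one_smul v := Subtype.ext (Matrix.one_mulVec v.1)
  mul_smul g h v := Subtype.ext (Matrix.mulVec_mulVec v.1 (mat g) (mat h)).symm

theorem Iso.smul_val {n : ℕ} (g : SU3 n) (v : Iso n) : (g • v).1 = mat g *ᵥ v.1 := rfl

theorem Iso.smul_eq_iff {n : ℕ} (g : SU3 n) (v : Iso n) : g • v = v ↔ mat g *ᵥ v.1 = v.1 :=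
  Subtype.ext_iff

/-- The zero vector, as an isotropic vector. -/
noncomputable def Iso.zero : Iso n := ⟨0, zero_dotProduct _⟩

/-- The isotropic transvection, as an element of `SU(3,q)`. -/
noncomputable def transvSU {n : ℕ} (v : Iso n) : SU3 n :=
  ⟨⟨transv v.1, transv_mem v.2⟩, transv_det v.2⟩

theorem transvSU_mat {n : ℕ} (v : Iso n) : mat (transvSU v) = transv v.1 := rfl

theorem stabilizer_isPGroup {v : Iso n} (hv : v.1 ≠ 0) :
    IsPGroup 2 (MulAction.stabilizer (SU3 n) v) := by
  rintro ⟨g, hg⟩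
  refine ⟨2, Subtype.ext (mat_injective ?_)⟩
  have h3 := sub_one_pow_three (mat_mem g) (mat_det g) hv v.2 ((Iso.smul_eq_iff g v).1 hg)
  -- in characteristic `2`, `g ^ 4 - 1 = (g - 1) ^ 4`
  have h4 : (mat g - 1) ^ 2 ^ 2 = mat g ^ 2 ^ 2 - 1 ^ 2 ^ 2 :=
    sub_pow_char_pow_of_commute 2 2 (Commute.one_right _)
  have h5 : (mat g - 1) ^ 2 ^ 2 = 0 := pow_eq_zero_of_le (by norm_num) h3
  rw [h5, one_pow, eq_comm, sub_eq_zero] at h4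
  exact (mat_pow g _).trans h4

theorem stabilizer_ne_bot {v : Iso n} (hv : v.1 ≠ 0) :
    MulAction.stabilizer (SU3 n) v ≠ ⊥ := by
  intro h
  have hmem : transvSU v ∈ MulAction.stabilizer (SU3 n) v := by
    rw [MulAction.mem_stabilizer_iff, Iso.smul_eq_iff, transvSU_mat, transv_mulVec, v.2, zero_smul,
      add_zero]
  rw [h, Subgroup.mem_bot] at hmem
  have h1 := congrArg mat hmem
  rw [transvSU_mat, mat_one, transv, add_eq_left] at h1
  obtain ⟨i, hi⟩ := Function.ne_iff.1 hv
  have h2 := congrFun (congrFun h1 i) i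
  rw [Matrix.vecMulVec_apply] at h2
  simp only [Pi.star_apply, Matrix.zero_apply, mul_eq_zero, star_eq_zero, or_self] at h2
  exact hi h2

theorem two_dvd_card_Iso : 2 ∣ Nat.card (Iso n) := by
  have h : (2 : ℤ) ∣ qval n := by
    exact_mod_cast dvd_pow_self 2 (by positivity)
  have : (2 : ℤ) ∣ Nat.card (Iso n) := by
    rw [card_Iso]
    exact ((dvd_pow h (by norm_num)).sub (dvd_pow h (by norm_num))).add (dvd_pow h (by norm_num))
  exact_mod_cast this

/-- A nontrivial `2`-subgroup fixes exactly one isotropic line, pointwise. Such a line has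
`q² - 1` nonzero vectors. -/
theorem card_fixed {H : Subgroup (SU3 n)} (hH : IsPGroup 2 H) (hH1 : H ≠ ⊥) :
    Nat.card {v : {v : Iso n // v.1 ≠ 0} // H ≤ MulAction.stabilizer (SU3 n) v.1} =
      qval n ^ 2 - 1 := by
  obtain ⟨g, hg, hg1⟩ := H.bot_or_exists_ne_one.resolve_left hH1
  -- the zero vector is one fixed point, and parity provides another
  obtain ⟨v, hvfix, hv0⟩ := hH.exists_fixed_point_of_prime_dvd_card_of_fixed_point (Iso n)
    (two_dvd_card_Iso n) (a := Iso.zero n)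
    (fun h => Subtype.ext (Matrix.mulVec_zero (mat h.1)))
  have hv : v.1 ≠ 0 := fun h => hv0 (Subtype.ext h.symm)
  have hvH : ∀ h ∈ H, mat h *ᵥ v.1 = v.1 := fun h hh =>
    (Iso.smul_eq_iff h v).1 (hvfix ⟨h, hh⟩)
  rw [← card_Fq2, ← Nat.card_units]
  symm
  refine Nat.card_congr (Equiv.ofBijective (fun c => ⟨⟨⟨c.1 • v.1, ?_⟩, ?_⟩, ?_⟩) ⟨?_, ?_⟩)
  · rw [star_smul, smul_dotProduct, dotProduct_smul, v.2, smul_zero, smul_zero]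
  · exact smul_ne_zero c.ne_zero hv
  · intro h hh
    rw [MulAction.mem_stabilizer_iff, Iso.smul_eq_iff]
    show mat h *ᵥ (c.1 • v.1) = c.1 • v.1
    rw [Matrix.mulVec_smul, hvH h hh]
  · intro c d hcd
    have := congrArg (fun v => v.1.1.1) hcd
    exact Units.ext (smul_left_injective _ hv this)
  · rintro ⟨⟨w, hw⟩, hwH⟩
    have hw' : ∃ c : Fq2 n, w.1 = c • v.1 := by
      by_contra hc
      refine hg1 (mat_injective ?_)
      exact eq_one_of_fixes (mat_mem g) (mat_det g) hv hw v.2 w.2 (hvH g hg)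
        ((Iso.smul_eq_iff g w).1 (hwH hg)) hc
    obtain ⟨c, hc⟩ := hw'
    have hc0 : c ≠ 0 := by
      rintro rfl
      exact hw (by rw [hc, zero_smul])
    exact ⟨Units.mk0 c hc0, Subtype.ext (Subtype.ext (Subtype.ext hc.symm))⟩

/-! ### The center of `SU(3,q)` -/

/-- A central element commutes with the transvections, so it preserves every isotropic line. -/
theorem cross_of_mem_center {z : SU3 n} (hz : z ∈ Subgroup.center (SU3 n)) (v : Iso n) :
    v.1 ⨯₃ (mat z *ᵥ v.1) = 0 := by
  by_cases hv : v.1 = 0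
  · rw [hv]; simp
  have h := congrArg mat (Subgroup.mem_center_iff.1 hz (transvSU v))
  rw [mat_mul, mat_mul, transvSU_mat, transv, add_mul, mul_add, one_mul, mul_one,
    add_right_inj, Matrix.vecMulVec_mul, Matrix.mul_vecMulVec] at h
  obtain ⟨i, hi⟩ := Function.ne_iff.1 hv
  have hs : star (v.1 i) ≠ 0 := star_ne_zero.2 hi
  have : mat z *ᵥ v.1 = ((star v.1 ᵥ* mat z) i / star (v.1 i)) • v.1 := by
    ext j
    have := congrFun (congrFun h j) i
    rw [Matrix.vecMulVec_apply, Matrix.vecMulVec_apply, Pi.star_apply] at this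
    rw [Pi.smul_apply, smul_eq_mul, div_mul_eq_mul_div, eq_div_iff hs, ← this, mul_comm]
  rw [this, map_smul, cross_self, smul_zero]

theorem exists_norm_one : ∃ a : Fq2 n, a ≠ 1 ∧ a ^ (qval n + 1) = 1 := by
  have hc := card_norm_fiber n (one_ne_zero) (one_pow (qval n))
  have h1 : 1 < (Finset.univ.filter fun z : Fq2 n => z ^ (qval n + 1) = 1).card := by
    rw [hc]; have := qval_pos n; omega
  obtain ⟨a, ha, ha1⟩ := Finset.exists_mem_ne h1 1
  exact ⟨a, ha1, (Finset.mem_filter.1 ha).2⟩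

theorem qval_mod_three (hn : 1 ≤ n) : qval n % 3 = 1 := by
  obtain ⟨k, rfl⟩ : ∃ k, n = k + 1 := ⟨n - 1, by omega⟩
  rw [qval, pow_succ, mul_comm, pow_mul, Nat.pow_mod]
  simp

theorem center_eq_bot (hn : 1 ≤ n) : Subgroup.center (SU3 n) = ⊥ := by
  rw [eq_bot_iff]
  intro z hz
  rw [Subgroup.mem_bot]
  obtain ⟨a, ha1, ha⟩ := exists_norm_one n
  have ha0 : a ≠ 0 := by rintro rfl; simp at ha
  have hiso : ∀ v : Fin 3 → Fq2 n,
      v 0 ^ (qval n + 1) + v 1 ^ (qval n + 1) + v 2 ^ (qval n + 1) = 0 →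
      v ⨯₃ (mat z *ᵥ v) = 0 := fun v hv =>
    cross_of_mem_center n hz ⟨v, by rw [dotProduct_star_self]; exact hv⟩
  have h2 : (1 : Fq2 n) + 1 = 0 := CharTwo.add_self_eq_zero 1
  -- the isotropic vectors `e i + e j` and `e i + a e j` force `z` to be scalar
  have key : ∀ b : Fq2 n, b ^ (qval n + 1) = 1 →
      (mat z 2 0 + mat z 2 1 * b = 0 ∧
        mat z 1 0 + mat z 1 1 * b = b * (mat z 0 0 + mat z 0 1 * b)) ∧
      (mat z 1 0 + mat z 1 2 * b = 0 ∧
        mat z 2 0 + mat z 2 2 * b = b * (mat z 0 0 + mat z 0 2 * b)) ∧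
      (mat z 0 1 + mat z 0 2 * b = 0) := by
    intro b hb
    have e1 := hiso ![1, b, 0] (by simp [hb, h2])
    have e2 := hiso ![1, 0, b] (by simp [hb, h2])
    have e3 := hiso ![0, 1, b] (by simp [hb, h2])
    have e10 := congrFun e1 1
    have e12 := congrFun e1 2
    have e21 := congrFun e2 2
    have e22 := congrFun e2 1
    have e30 := congrFun e3 1
    simp [cross_apply, Matrix.mulVec, dotProduct, Fin.sum_univ_three] at e10 e12 e21 e22 e30
    refine ⟨⟨?_, ?_⟩, ⟨?_, ?_⟩, ?_⟩ <;> grind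
  obtain ⟨⟨p1, p2⟩, ⟨p3, p4⟩, p5⟩ := key 1 (one_pow _)
  obtain ⟨⟨q1, q2⟩, ⟨q3, q4⟩, q5⟩ := key a ha
  have ha' : a - 1 ≠ 0 := sub_ne_zero.2 ha1
  have z21 : mat z 2 1 = 0 := by grind
  have z20 : mat z 2 0 = 0 := by grind
  have z12 : mat z 1 2 = 0 := by grind
  have z10 : mat z 1 0 = 0 := by grind
  have z02 : mat z 0 2 = 0 := by grind
  have z01 : mat z 0 1 = 0 := by grind
  have z11 : mat z 1 1 = mat z 0 0 := by grind
  have z22 : mat z 2 2 = mat z 0 0 := by grind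
  have hdet : mat z 0 0 ^ 3 = 1 := by
    have := (mat_det z)
    rw [Matrix.det_fin_three] at this
    grind
  have hnorm : mat z 0 0 ^ (qval n + 1) = 1 := by
    have := congrFun (congrFun (Matrix.mem_unitaryGroup_iff.1 (mat_mem z)) 0) 0
    simpa [Matrix.mul_apply, Fin.sum_univ_three, Matrix.star_apply, z01, z02, star_Fq2, ← pow_succ']
      using this
  have hz00 : mat z 0 0 = 1 := by
    have hcop : Nat.gcd 3 (qval n + 1) = 1 := by
      have := qval_mod_three n hn
      rw [Nat.gcd_rec]
      have h : (qval n + 1) % 3 = 2 := by omega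
      rw [h]
      rfl
    have := pow_gcd_eq_one.2 ⟨hdet, hnorm⟩
    rwa [hcop, pow_one] at this
  apply mat_injective
  rw [mat_one]
  ext i j
  fin_cases i <;> fin_cases j <;> simp [*]

end

-- STATEMENT 17
theorem stmt17 (n : ℕ) (hn : 1 ≤ n) (m : Subgroup (PSU3 n) → ℤ)
    (hm : IsPMobiusBot 2 m) :
    (∑ᶠ H ∈ {H : Subgroup (PSU3 n) | IsPGroup 2 H ∧ H ≠ ⊥}, m H) =
      -((qval n : ℤ) ^ 3 + 1) := by
  let f : SU3 n →* PSU3 n := QuotientGroup.mk' (Subgroup.center (SU3 n))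
  have hf : Function.Injective f := by
    rw [← MonoidHom.ker_eq_bot_iff, QuotientGroup.ker_mk', center_eq_bot n hn]
  have hf' : Function.Surjective f := QuotientGroup.mk'_surjective _
  have hdc := double_count (X := {v : Iso n // v.1 ≠ 0}) 2 m hm
    (fun v => (MulAction.stabilizer (SU3 n) v.1).map f)
    (fun v => (stabilizer_isPGroup n v.2).map f)
    (fun v h => stabilizer_ne_bot n v.2 ((Subgroup.map_eq_bot_iff_of_injective _ hf).1 h))
    (qval n ^ 2 - 1)
    (fun H hH hH1 => by
      have hmap : (H.comap f).map f = H := Subgroup.map_comap_eq_self_of_surjective hf' H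
      have hne : H.comap f ≠ ⊥ := fun h => hH1 (by rw [← hmap, h, Subgroup.map_bot])
      rw [← card_fixed n (hH.comap_of_injective f hf) hne]
      refine Nat.card_congr (Equiv.subtypeEquivRight fun v => ?_)
      rw [← Subgroup.map_le_map_iff_of_injective hf, hmap])
  have hX : (Nat.card {v : Iso n // v.1 ≠ 0} : ℤ) = Nat.card (Iso n) - 1 := by
    have e : Nat.card {v : Iso n // v.1 = 0} = 1 := by
      rw [Nat.card_eq_one_iff_unique]
      exact ⟨⟨fun a b => Subtype.ext (Subtype.ext (a.2.trans b.2.symm))⟩, ⟨⟨Iso.zero n, rfl⟩⟩⟩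
    have h := Nat.card_congr (Equiv.sumCompl fun v : Iso n => v.1 = 0)
    rw [Nat.card_sum, e] at h
    rw [← h]
    push_cast
    ring
  have hq : (2 : ℤ) ≤ qval n := by exact_mod_cast two_le_qval n
  rw [hX, card_Iso, Nat.cast_sub (Nat.one_le_pow _ _ (qval_pos n)), Nat.cast_pow, Nat.cast_one]
    at hdc
  have hq2 : ((qval n : ℤ) ^ 2 - 1) ≠ 0 := by nlinarith
  apply mul_left_cancel₀ hq2
  rw [hdc]
  ring

end PSUPaper
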